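/- arXiv:1309.5588 — 5 statements merged into one kernel-verified Lean document; each statement's English description precedes it below -/
import Mathlib

section
/- Let S be a finite commutative semigroup. Then D(S) = d(S) + 1, where D(S) is the large Davenport constant and d(S) is the small Davenport constant. -/
namespace EGZ

variable {S : Type}

/-- `rep a n = (n+1)·a`, the (n+1)-fold sum of `a` with itself (defined for semigroups,
where the 0-fold sum is unavailable). -/
def rep [AddCommSemigroup S] (a : S) : ℕ → S
  | 0 => a
  | n + 1 => rep a n + a

/-- The sum of all terms of a sequence (= multiset) over the semigroup `S`, computed in
`WithZero S` (i.e. `S` with an extra identity element `0` adjoined); the empty sequence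
has sum `0`, and a nonempty sequence has sum `↑s` where `s ∈ S` is its genuine sum. -/
def mSum [AddCommSemigroup S] (T : Multiset S) : WithZero S :=
  (T.map (fun s => (s : WithZero S))).sum

/-- `σ(A) = σ(B)`, with the paper's convention: the empty sequence is regarded as having
sum equal to the identity element `e` of `S`, whenever `S` has an identity element. -/
def EqSum [AddCommSemigroup S] (A B : Multiset S) : Prop :=
  mSum A = mSum B ∨
    ∃ e : S, (∀ a : S, e + a = a) ∧
      ((mSum A = 0 ∧ mSum B = (e : WithZero S)) ∨
        (mSum A = (e : WithZero S) ∧ mSum B = 0))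

/-- A sequence `T` over `S` is reducible if some proper subsequence `B` of `T`
satisfies `σ(B) = σ(T)`. -/
def Reducible [AddCommSemigroup S] (T : Multiset S) : Prop :=
  ∃ B : Multiset S, B < T ∧ EqSum B T

/-- The (large) Davenport constant `D(S)`: the smallest `ℓ` such that every sequence over
`S` of length at least `ℓ` is reducible. -/
noncomputable def DavC (S : Type) [AddCommSemigroup S] : ℕ :=
  sInf {ℓ : ℕ | ∀ T : Multiset S, ℓ ≤ Multiset.card T → Reducible T}

/-- The property defining the small Davenport constant: `ℓ` is admissible if for every `m`
and every `c₁, …, c_m ∈ S` there is `J ⊆ [1, m]` with `|J| ≤ ℓ` and `Σ_{j=1}^m c_j = Σ_{j∈J} c_j`. -/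
def SmallDavProp (S : Type) [AddCommSemigroup S] (ℓ : ℕ) : Prop :=
  ∀ (m : ℕ) (c : Fin m → S), ∃ J : Finset (Fin m),
    J.card ≤ ℓ ∧ EqSum (J.val.map c) ((Finset.univ : Finset (Fin m)).val.map c)

/-- The small Davenport constant `d(S)`. -/
noncomputable def smallDavC (S : Type) [AddCommSemigroup S] : ℕ :=
  sInf {ℓ : ℕ | SmallDavProp S ℓ}

/-- The period of an element `a ∈ S`: the least `t > 0` such that `r·a = (r+t)·a`
for some `r > 0`. -/
noncomputable def period [AddCommSemigroup S] (a : S) : ℕ :=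
  sInf {t : ℕ | 0 < t ∧ ∃ k : ℕ, rep a (k + t) = rep a k}

/-- `exp(S)`: the least common multiple of the periods of all elements of `S`. -/
noncomputable def expS (S : Type) [AddCommSemigroup S] [Fintype S] : ℕ :=
  (Finset.univ : Finset S).lcm (fun a => period a)

/-- `κ(S) = ⌈|S| / exp(S)⌉ · exp(S)`. -/
noncomputable def kappa (S : Type) [AddCommSemigroup S] [Fintype S] : ℕ :=
  ((Fintype.card S + expS S - 1) / expS S) * expS S

/-- `E(S)`: the smallest positive integer `ℓ` such that every sequence `T` over `S` of
length at least `ℓ` contains a subsequence `T'` with `|T| - |T'| = κ(S)` and `σ(T') = σ(T)`. -/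
noncomputable def EC (S : Type) [AddCommSemigroup S] [Fintype S] : ℕ :=
  sInf {ℓ : ℕ | 0 < ℓ ∧ ∀ T : Multiset S, ℓ ≤ Multiset.card T →
    ∃ B : Multiset S, B ≤ T ∧ Multiset.card T - Multiset.card B = kappa S ∧ EqSum B T}

end EGZ

/-! A bound `ℓ` is admissible for `d(S)` exactly when `ℓ + 1` is admissible for `D(S)`: if every
sequence longer than `ℓ` is reducible, passing repeatedly to a proper subsequence with the same sum
ends at one with at most `ℓ` terms, and conversely a subsequence with at most `ℓ` terms of a longer
sequence is proper. So the two constants differ by one as soon as some bound is admissible. For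
finite `S` such a bound exists: two of the partial sums of a sequence with more than `|S|` terms
agree, and the block of terms between them may be deleted. -/

namespace EGZ

section Subsequence

variable {α β : Type*}

theorem exists_le_map_eq_of_le_map {f : α → β} {s : Multiset α} {t : Multiset β}
    (h : t ≤ s.map f) : ∃ u ≤ s, u.map f = t := by
  induction s, t using Quotient.inductionOn₂ with
  | h l m =>
    obtain ⟨m', hperm, hsub⟩ := h
    obtain ⟨l', hl', rfl⟩ := List.sublist_map_iff.1 hsub
    exact ⟨l', hl'.subperm, Multiset.coe_eq_coe.2 hperm⟩

theorem forall_exists_finset_iff_forall_exists_le {P : Multiset α → Multiset α → Prop} {ℓ : ℕ} :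
    (∀ (m : ℕ) (c : Fin m → α), ∃ J : Finset (Fin m),
        J.card ≤ ℓ ∧ P (J.val.map c) (Finset.univ.val.map c)) ↔
      ∀ T : Multiset α, ∃ B ≤ T, B.card ≤ ℓ ∧ P B T := by
  constructor
  · intro h T
    obtain ⟨L, rfl⟩ := Quot.exists_rep T
    obtain ⟨J, hJ, hP⟩ := h L.length L.get
    have hL : Finset.univ.val.map L.get = (L : Multiset α) := by simp
    rw [hL] at hP
    have hle : J.val.map L.get ≤ L := hL ▸ Multiset.map_le_map (Finset.val_le_iff.2 J.subset_univ)
    exact ⟨J.val.map L.get, hle, by simpa using hJ, hP⟩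
  · intro h m c
    obtain ⟨B, hB, hcard, hP⟩ := h (Finset.univ.val.map c)
    obtain ⟨u, hu, rfl⟩ := exists_le_map_eq_of_le_map hB
    exact ⟨⟨u, Multiset.nodup_of_le hu Finset.univ.nodup⟩, by simpa using hcard, hP⟩

end Subsequence

variable {S : Type} [AddCommSemigroup S]

theorem mSum_add (A B : Multiset S) : mSum (A + B) = mSum A + mSum B := by
  simp [mSum]

theorem EqSum.refl (A : Multiset S) : EqSum A A :=
  Or.inl rfl

theorem EqSum.trans {A B C : Multiset S} (hAB : EqSum A B) (hBC : EqSum B C) : EqSum A C := by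
  have identity_unique {e f : S} (he : ∀ a, e + a = a) (hf : ∀ a, f + a = a) : e = f := by
    rw [← hf e, add_comm, he]
  rcases hAB with hAB | ⟨e, he, hAB⟩
  · simpa only [EqSum, hAB] using hBC
  rcases hBC with hBC | ⟨f, hf, hBC⟩
  · exact Or.inr ⟨e, he, by simpa only [hBC] using hAB⟩
  obtain rfl := identity_unique he hf
  left
  rcases hAB with ⟨hA, hB⟩ | ⟨hA, hB⟩ <;> rcases hBC with ⟨hB', hC⟩ | ⟨hB', hC⟩ <;>
    simp_all

theorem smallDavProp_iff_forall_exists_le {ℓ : ℕ} :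
    SmallDavProp S ℓ ↔ ∀ T : Multiset S, ∃ B ≤ T, B.card ≤ ℓ ∧ EqSum B T :=
  forall_exists_finset_iff_forall_exists_le

/-- The property defining the large Davenport constant: `ℓ` is admissible if every sequence over
`S` of length at least `ℓ` is reducible. -/
def LargeDavProp (S : Type) [AddCommSemigroup S] (ℓ : ℕ) : Prop :=
  ∀ T : Multiset S, ℓ ≤ T.card → Reducible T

theorem not_reducible_zero : ¬ Reducible (0 : Multiset S) :=
  fun ⟨_, hlt, _⟩ => not_lt_bot hlt

theorem not_largeDavProp_zero : ¬ LargeDavProp S 0 :=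
  fun h => not_reducible_zero (h 0 le_rfl)

theorem LargeDavProp.exists_le_card_le_eqSum {ℓ : ℕ} (h : LargeDavProp S (ℓ + 1))
    (T : Multiset S) : ∃ B ≤ T, B.card ≤ ℓ ∧ EqSum B T := by
  induction T using Multiset.strongInductionOn with
  | ih T ih =>
    rcases Nat.lt_or_ge ℓ T.card with hlong | hshort
    · obtain ⟨B, hBT, hsumBT⟩ := h T hlong
      obtain ⟨C, hCB, hcard, hsumCB⟩ := ih B hBT
      exact ⟨C, hCB.trans hBT.le, hcard, hsumCB.trans hsumBT⟩
    · exact ⟨T, le_rfl, hshort, EqSum.refl T⟩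

theorem smallDavProp_iff_largeDavProp_succ {ℓ : ℕ} :
    SmallDavProp S ℓ ↔ LargeDavProp S (ℓ + 1) := by
  rw [smallDavProp_iff_forall_exists_le]
  refine ⟨fun h T hT => ?_, LargeDavProp.exists_le_card_le_eqSum⟩
  obtain ⟨B, hBT, hcard, hsum⟩ := h T
  have hne : B ≠ T := by
    rintro rfl
    omega
  exact ⟨B, hBT.lt_of_ne hne, hsum⟩

theorem reducible_coe_of_mSum_take_eq {L : List S} {i j : ℕ} (hij : i < j) (hj : j ≤ L.length)
    (h : mSum (L.take i : Multiset S) = mSum (L.take j : Multiset S)) :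
    Reducible (L : Multiset S) := by
  have hL : (L : Multiset S) = (L.take j : Multiset S) + L.drop j := by
    rw [Multiset.coe_add, List.take_append_drop]
  have hlt : (L.take i : Multiset S) < L.take j := by
    have hle : (L.take i : Multiset S) ≤ L.take j :=
      (List.take_sublist_take_left hij.le).subperm
    refine hle.lt_of_ne fun heq => hij.ne ?_
    simpa [hj, hij.le.trans hj] using congrArg Multiset.card heq
  refine ⟨L.take i + L.drop j, ?_, Or.inl ?_⟩
  · rw [hL]
    gcongr
  · rw [hL, mSum_add, mSum_add, h]

theorem reducible_of_card_lt [Finite S] {T : Multiset S} (hT : Nat.card S < T.card) :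
    Reducible T := by
  obtain ⟨L, rfl⟩ := Quot.exists_rep T
  have : Finite (WithZero S) := inferInstanceAs (Finite (Option S))
  let partialSum (i : Fin (L.length + 1)) : WithZero S := mSum (L.take i : Multiset S)
  have hnotinj : ¬ Function.Injective partialSum := by
    intro hinj
    have hcard : L.length + 1 ≤ Nat.card S + 1 := by
      simpa [WithZero, Finite.card_option] using Nat.card_le_card_of_injective partialSum hinj
    exact hT.not_ge (Nat.le_of_succ_le_succ hcard)
  obtain ⟨i, j, hsum, hne⟩ := Function.not_injective_iff.1 hnotinj
  rcases hne.lt_or_gt with hij | hji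
  · exact reducible_coe_of_mSum_take_eq hij j.is_le hsum
  · exact reducible_coe_of_mSum_take_eq hji i.is_le hsum.symm

theorem smallDavProp_card [Finite S] : SmallDavProp S (Nat.card S) :=
  smallDavProp_iff_largeDavProp_succ.2 fun _ hT => reducible_of_card_lt hT

end EGZ

open EGZ in
theorem largeDavenport_eq_smallDavenport_add_one_general (S : Type) [AddCommSemigroup S]
    (h : ∃ ℓ, SmallDavProp S ℓ) :
    DavC S = smallDavC S + 1 := by
  obtain ⟨ℓ, hℓ⟩ := h
  have hne : {k | LargeDavProp S k}.Nonempty := ⟨ℓ + 1, smallDavProp_iff_largeDavProp_succ.1 hℓ⟩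
  have hpos : 1 ≤ sInf {k | LargeDavProp S k} :=
    Nat.one_le_iff_ne_zero.2 fun h0 => not_largeDavProp_zero (h0 ▸ Nat.sInf_mem hne)
  calc
    DavC S = sInf {k | LargeDavProp S (k + 1)} + 1 := (Nat.sInf_add hpos).symm
    _ = smallDavC S + 1 := by simp only [smallDavC, smallDavProp_iff_largeDavProp_succ]

/-- For a finite commutative semigroup `S`, `D(S) = d(S) + 1`. -/
theorem largeDavenport_eq_smallDavenport_add_one (S : Type) [AddCommSemigroup S] [Fintype S] :
    EGZ.DavC S = EGZ.smallDavC S + 1 :=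
  largeDavenport_eq_smallDavenport_add_one_general S ⟨_, EGZ.smallDavProp_card⟩
end

section
/- Let S be a finite commutative monoid (a finite commutative semigroup with identity element 0_S). Then E(S) ≥ D(S) + κ(S) − 1. -/
namespace EGZ

theorem add_nsmul_eq_nsmul_of_dvd {M : Type*} [AddMonoid M] {x : M} {k n p q : ℕ}
    (hp : (k + p) • x = k • x) (hpq : p ∣ q) (hkn : k ≤ n) : (n + q) • x = n • x := by
  obtain ⟨c, rfl⟩ := hpq
  induction c with
  | zero => simp
  | succ c ih =>
    calc (n + p * (c + 1)) • x
        = (n - k + p * c) • x + (k + p) • x := by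
          rw [← add_nsmul]
          congr 1
          rw [mul_add_one]
          omega
      _ = (n + p * c) • x := by
          rw [hp, ← add_nsmul]
          congr 1
          omega
      _ = n • x := ih

theorem exists_le_count_of_card_mul_lt_card {α : Type*} [Fintype α] [DecidableEq α]
    {T : Multiset α} {n : ℕ} (h : Fintype.card α * n < T.card) : ∃ a, n ≤ T.count a := by
  have hsum : ∑ _a : α, n < ∑ a, T.count a := by
    simpa [Multiset.sum_count_eq_card fun a _ ↦ Finset.mem_univ a] using h
  obtain ⟨a, -, ha⟩ := Finset.exists_lt_of_sum_lt hsum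
  exact ⟨a, ha.le⟩

section Semigroup

variable {S : Type} [AddCommSemigroup S]

theorem mSum_replicate (n : ℕ) (a : S) : mSum (Multiset.replicate n a) = n • (a : WithZero S) := by
  simp [mSum]

theorem coe_rep (a : S) (n : ℕ) : ((rep a n : S) : WithZero S) = (n + 1) • (a : WithZero S) := by
  induction n with
  | zero => simp [rep]
  | succ n ih => rw [rep, WithZero.coe_add, ih, ← succ_nsmul]

theorem exists_pos_and_exists_rep_add_eq [Finite S] (a : S) :
    ∃ t, 0 < t ∧ ∃ k, rep a (k + t) = rep a k := by
  obtain ⟨m, -, n, -, hmn, h⟩ :=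
    Set.infinite_univ.exists_lt_map_eq_of_mapsTo (Set.mapsTo_univ (rep a) _) Set.finite_univ
  exact ⟨n - m, Nat.sub_pos_of_lt hmn, m, by rw [Nat.add_sub_cancel' hmn.le, h]⟩

theorem period_pos [Finite S] (a : S) : 0 < period a :=
  (Nat.sInf_mem (exists_pos_and_exists_rep_add_eq a)).1

theorem exists_rep_add_period_eq [Finite S] (a : S) : ∃ k, rep a (k + period a) = rep a k :=
  (Nat.sInf_mem (exists_pos_and_exists_rep_add_eq a)).2

theorem exists_add_period_nsmul_eq [Finite S] (a : S) :
    ∃ k, (k + period a) • (a : WithZero S) = k • (a : WithZero S) := by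
  obtain ⟨k, hk⟩ := exists_rep_add_period_eq a
  refine ⟨k + 1, ?_⟩
  rw [add_right_comm, ← coe_rep, ← coe_rep, hk]

variable (S) in
theorem expS_pos [Fintype S] : 0 < expS S := by
  refine Nat.pos_of_ne_zero fun h ↦ ?_
  obtain ⟨a, -, ha⟩ := Finset.lcm_eq_zero_iff.1 h
  exact (period_pos a).ne' ha

variable (S) in
theorem kappa_pos [Fintype S] [Nonempty S] : 0 < kappa S := by
  have hexp : 0 < expS S := expS_pos S
  have hcard : 0 < Fintype.card S := Fintype.card_pos
  exact Nat.mul_pos (Nat.div_pos (by omega) hexp) hexp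

theorem period_dvd_kappa [Fintype S] (a : S) : period a ∣ kappa S :=
  (Finset.dvd_lcm (Finset.mem_univ a)).mul_left _

variable (S) in
theorem exists_forall_add_kappa_nsmul_eq [Fintype S] :
    ∃ K, ∀ a : S, (K + kappa S) • (a : WithZero S) = K • (a : WithZero S) := by
  choose k hk using exists_add_period_nsmul_eq (S := S)
  obtain ⟨K, hK⟩ := Finite.exists_le k
  exact ⟨K, fun a ↦ add_nsmul_eq_nsmul_of_dvd (hk a) (period_dvd_kappa a) (hK a)⟩

/-- The property that `k` terms of `T` can be deleted without changing its sum, so that `EC S` is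
the least positive `ℓ` for which all sequences of length at least `ℓ` have it with `k = kappa S`.
As in `EC`, the subtraction is truncated; this is harmless because `B ≤ T`. -/
def HasDeletion (k : ℕ) (T : Multiset S) : Prop :=
  ∃ B ≤ T, T.card - B.card = k ∧ EqSum B T

theorem HasDeletion.le_card {k : ℕ} {T : Multiset S} (h : HasDeletion k T) : k ≤ T.card := by
  obtain ⟨B, -, hcard, -⟩ := h
  omega

theorem hasDeletion_of_add_le_count [DecidableEq S] {K k : ℕ} {a : S} {T : Multiset S}
    (ha : (K + k) • (a : WithZero S) = K • (a : WithZero S)) (hT : K + k ≤ T.count a) :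
    HasDeletion k T := by
  obtain ⟨R, rfl⟩ := Multiset.le_iff_exists_add.1 (Multiset.le_count_iff_replicate_le.1 hT)
  refine ⟨Multiset.replicate K a + R, ?_, ?_, Or.inl ?_⟩
  · gcongr
    exact Nat.le_add_right K k
  · simp only [Multiset.card_add, Multiset.card_replicate]
    omega
  · rw [mSum_add, mSum_add, mSum_replicate, mSum_replicate, ha]

variable (S) in
theorem exists_forall_hasDeletion_kappa [Fintype S] :
    ∃ ℓ, 0 < ℓ ∧ ∀ T : Multiset S, ℓ ≤ T.card → HasDeletion (kappa S) T := by
  classical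
  obtain ⟨K, hK⟩ := exists_forall_add_kappa_nsmul_eq S
  refine ⟨Fintype.card S * (K + kappa S) + 1, Nat.succ_pos _, fun T hT ↦ ?_⟩
  obtain ⟨a, ha⟩ := exists_le_count_of_card_mul_lt_card hT
  exact hasDeletion_of_add_le_count (hK a) ha

theorem hasDeletion_kappa_of_EC_le_card [Fintype S] {T : Multiset S} (hT : EC S ≤ T.card) :
    HasDeletion (kappa S) T :=
  (Nat.sInf_mem (exists_forall_hasDeletion_kappa S)).2 T hT

variable (S) in
theorem kappa_le_EC [Fintype S] [Nonempty S] : kappa S ≤ EC S := by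
  have hcard : (Multiset.replicate (EC S) (Classical.arbitrary S)).card = EC S :=
    Multiset.card_replicate _ _
  exact (hasDeletion_kappa_of_EC_le_card hcard.ge).le_card.trans_eq hcard

end Semigroup

section Monoid

variable {S : Type} [AddCommMonoid S]

theorem lift_id_mSum (T : Multiset S) : WithZero.lift (AddHom.id S) (mSum T) = T.sum := by
  simp [mSum, map_multiset_sum, Function.comp_def]

theorem eqSum_iff_sum_eq_sum {A B : Multiset S} : EqSum A B ↔ A.sum = B.sum := by
  rw [EqSum, ← lift_id_mSum A, ← lift_id_mSum B]
  have eq_zero_of_forall_add {e : S} (he : ∀ a, e + a = a) : e = 0 := by simpa using he 0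
  constructor
  · rintro (h | ⟨e, he, ⟨hA, hB⟩ | ⟨hA, hB⟩⟩)
    · rw [h]
    · simp [hA, hB, eq_zero_of_forall_add he]
    · simp [hA, hB, eq_zero_of_forall_add he]
  · intro h
    cases hA : mSum A using WithZero.recZeroCoe <;> cases hB : mSum B using WithZero.recZeroCoe
    · exact Or.inl rfl
    · exact Or.inr ⟨0, zero_add, Or.inl ⟨rfl, by simpa [hA, hB] using h.symm⟩⟩
    · exact Or.inr ⟨0, zero_add, Or.inr ⟨by simpa [hA, hB] using h, rfl⟩⟩
    · exact Or.inl (by simpa [hA, hB] using h)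

theorem sum_sub_replicate_zero [DecidableEq S] (B : Multiset S) (n : ℕ) :
    (B - Multiset.replicate n 0).sum = B.sum := by
  have hinter : (B ∩ Multiset.replicate n 0).sum = 0 :=
    Multiset.sum_eq_zero fun _ hx ↦ Multiset.eq_of_mem_replicate (Multiset.mem_inter.1 hx).2
  conv_rhs => rw [← Multiset.sub_add_inter B (Multiset.replicate n 0), Multiset.sum_add, hinter,
    add_zero]

theorem reducible_of_hasDeletion_add_replicate_zero {T : Multiset S} {n : ℕ}
    (h : HasDeletion (n + 1) (T + Multiset.replicate n 0)) : Reducible T := by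
  classical
  obtain ⟨B, hB, hcard, hsum⟩ := h
  have hle : B - Multiset.replicate n 0 ≤ T := tsub_le_iff_right.2 hB
  have hne : B - Multiset.replicate n 0 ≠ T := by
    intro heq
    have hTB : T.card ≤ B.card := Multiset.card_le_card (heq ▸ tsub_le_self)
    rw [Multiset.card_add, Multiset.card_replicate] at hcard
    omega
  refine ⟨B - Multiset.replicate n 0, hle.lt_of_ne hne, eqSum_iff_sum_eq_sum.2 ?_⟩
  calc (B - Multiset.replicate n 0).sum
      = B.sum := sum_sub_replicate_zero B n
    _ = (T + Multiset.replicate n 0).sum := eqSum_iff_sum_eq_sum.1 hsum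
    _ = T.sum := by simp

theorem reducible_of_EC_lt_card_add_kappa [Fintype S] {T : Multiset S}
    (hT : EC S < T.card + kappa S) : Reducible T := by
  obtain ⟨n, hn⟩ := Nat.exists_eq_add_one.2 (kappa_pos S)
  apply reducible_of_hasDeletion_add_replicate_zero (n := n)
  rw [← hn]
  apply hasDeletion_kappa_of_EC_le_card
  rw [Multiset.card_add, Multiset.card_replicate]
  omega

end Monoid

end EGZ

/-- For a finite commutative monoid `S` (a finite commutative semigroup
with an identity element `0_S`), `E(S) ≥ D(S) + κ(S) − 1`. -/
theorem E_ge_D_add_kappa_sub_one (S : Type) [AddCommMonoid S] [Fintype S] :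
    EGZ.DavC S + EGZ.kappa S - 1 ≤ EGZ.EC S := by
  have hκ : EGZ.kappa S ≤ EGZ.EC S := EGZ.kappa_le_EC S
  have hD : EGZ.DavC S ≤ EGZ.EC S + 1 - EGZ.kappa S :=
    Nat.sInf_le fun T hT ↦ EGZ.reducible_of_EC_lt_card_add_kappa (by omega)
  omega
end

section
/- Let N be a finite commutative nilsemigroup with zero element ∞_N, and let a, b ∈ N with a <_H b (that is, a ≤_H b but not b ≤_H a, where ≤_H is the Green's preorder). Then the annihilator ∞:b = {x ∈ N⁰ : x + b = ∞_N} is a proper subset of ∞:a = {x ∈ N⁰ : x + a = ∞_N}. -/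
/-- The Green preorder on a commutative semigroup: `a ≤_H b` iff `a = b + t` for some
`t ∈ N⁰` (i.e. `a = b`, corresponding to the adjoined identity, or `a = b + t` with `t ∈ N`). -/
def GreenLe {N : Type} [AddCommSemigroup N] (a b : N) : Prop :=
  a = b ∨ ∃ t : N, a = b + t

/-- The annihilator `∞ : a = {x ∈ N⁰ : x + a = ∞}`, as a subset of
`N⁰ = WithZero N` (`N` with an identity `0` adjoined). -/
def ann {N : Type} [AddCommSemigroup N] (z a : N) : Set (WithZero N) :=
  {x : WithZero N | x + (a : WithZero N) = (z : WithZero N)}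

/-!
If `a = b + t` then `∞:b ⊆ ∞:a`. If the two annihilators were equal, then `b + (n + 1) • t = ∞`
would say `n • t ∈ ∞:a = ∞:b`, i.e. `b + n • t = ∞`. Starting from a multiple of `t` that equals
`∞` and cancelling its copies of `t` one at a time gives `b = ∞`, hence `a = b`.
-/

section Annihilator

variable {N : Type} [AddCommSemigroup N] {z a b t : N}

theorem zero_mem_ann_iff : 0 ∈ ann z a ↔ a = z := by
  simp only [ann, Set.mem_ofPred_eq, zero_add, WithZero.coe_inj]

theorem coe_mem_ann_iff {x : N} : (x : WithZero N) ∈ ann z a ↔ x + a = z := by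
  simp only [ann, Set.mem_ofPred_eq, ← WithZero.coe_add, WithZero.coe_inj]

theorem ann_subset_ann_add (ht : z + t = z) : ann z b ⊆ ann z (b + t) := by
  intro x (hx : x + b = z)
  calc
    x + ((b + t : N) : WithZero N) = x + b + t := by rw [WithZero.coe_add, add_assoc]
    _ = z := by rw [hx, ← WithZero.coe_add, ht]

theorem eq_of_ann_add_subset_of_add_rep_eq (hsub : ann z (b + t) ⊆ ann z b) {n : ℕ}
    (hn : b + EGZ.rep t n = z) : b = z := by
  induction n with
  | zero => exact zero_mem_ann_iff.mp (hsub (zero_mem_ann_iff.mpr hn))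
  | succ n ih =>
    have hmem : ((EGZ.rep t n : N) : WithZero N) ∈ ann z (b + t) :=
      coe_mem_ann_iff.mpr (by rwa [add_left_comm])
    have hsum : EGZ.rep t n + b = z := coe_mem_ann_iff.mp (hsub hmem)
    exact ih (by rwa [add_comm])

theorem ann_ssubset_of_greenLt_general (hz : ∀ x : N, z + x = z)
    (hnil : ∀ x : N, ∃ n : ℕ, EGZ.rep x n = z) (hab : GreenLe a b) (hne : a ≠ b) :
    ann z b ⊂ ann z a := by
  obtain rfl | ⟨t, rfl⟩ := hab
  · exact absurd rfl hne
  obtain ⟨n, hn⟩ := hnil t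
  refine ⟨ann_subset_ann_add (hz t), fun hsub ↦ hne ?_⟩
  have hb : b = z :=
    eq_of_ann_add_subset_of_add_rep_eq hsub (n := n) (by rw [hn, add_comm, hz])
  rw [hb, hz]

end Annihilator

/-- Let `N` be a finite commutative nilsemigroup with zero element `z`,
and let `a, b ∈ N` with `a <_H b`.  Then `∞:b` is a proper subset of `∞:a`. -/
theorem ann_ssubset_of_greenLt (N : Type) [AddCommSemigroup N] [Fintype N]
    (z : N) (hz : ∀ a : N, z + a = z) (hnil : ∀ x : N, ∃ n : ℕ, EGZ.rep x n = z)
    (a b : N) (hab : GreenLe a b) (hba : ¬ GreenLe b a) :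
    ann z b ⊂ ann z a :=
  ann_ssubset_of_greenLt_general hz hnil hab fun h ↦ hba (Or.inl h.symm)
end

section
/- Let S be a finite commutative semigroup and let I be a nonempty ideal of S. Then D(S) ≥ D(S/I), where S/I is the Rees quotient semigroup of S by I. -/
/-!
Reducibility descends along any surjective homomorphism, because a sequence over the target is the
image of a sequence over the source, and a homomorphism maps equal sums to equal sums (surjectivity
makes the image of an identity element an identity element). So a length bound valid for `S` is
valid for its quotients. For finite `S` such a bound exists by the pigeonhole principle applied to
the sums of the prefixes of a sequence: a block between two prefixes of equal sum may be deleted.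
-/

namespace EGZ

theorem coe_take_strictMono {α : Type*} (L : List α) :
    StrictMono fun i : Fin (L.length + 1) => (L.take i : Multiset α) := by
  refine Monotone.strictMono_of_injective
    (fun i j hij => (List.take_sublist_take_left hij).subperm) fun i j hij => ?_
  have hlen : (L.take i).length = (L.take j).length := congrArg Multiset.card hij
  rw [List.length_take_of_le i.is_le, List.length_take_of_le j.is_le] at hlen
  exact Fin.ext hlen

/-- `ℓ` is a length from which on every sequence over `S` is reducible, so that `DavC S` is the
least such `ℓ`, and the junk value `0` if there is none. -/
def IsDavenportBound (S : Type) [AddCommSemigroup S] (ℓ : ℕ) : Prop :=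
  ∀ T : Multiset S, ℓ ≤ T.card → Reducible T

section PrefixSums

variable {S : Type} [AddCommSemigroup S]

-- `mSum` unfolds to a sum over the monadic lift `T >>= pure ∘ (↑)`; this is the plain form.
theorem mSum_eq_sum_map_coe (T : Multiset S) :
    mSum T = (T.map ((↑) : S → WithZero S)).sum := by
  simp [mSum]

theorem Reducible.of_lt_of_le {A B T : Multiset S} (hAB : A < B) (hBT : B ≤ T)
    (hsum : mSum A = mSum B) : Reducible T := by
  obtain ⟨C, rfl⟩ := exists_add_of_le hBT
  exact ⟨A + C, add_lt_add_left hAB C, Or.inl (by rw [mSum_add, mSum_add, hsum])⟩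

theorem Reducible.coe_of_card_lt_length [Finite S] {L : List S} (hL : Nat.card S < L.length) :
    Reducible (L : Multiset S) := by
  have : Finite (WithZero S) := inferInstanceAs (Finite (Option S))
  have hcard : Nat.card (WithZero S) = Nat.card S + 1 := Finite.card_option
  let prefixSum (i : Fin (L.length + 1)) : WithZero S := mSum (L.take i : Multiset S)
  have hninj : ¬ Function.Injective prefixSum := fun hinj => by
    have hle := Nat.card_le_card_of_injective prefixSum hinj
    rw [Nat.card_fin] at hle
    lia
  obtain ⟨i, j, hsum, hij⟩ := Function.not_injective_iff.1 hninj
  rcases hij.lt_or_gt with hlt | hlt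
  · exact .of_lt_of_le (coe_take_strictMono L hlt) (L.take_sublist j).subperm hsum
  · exact .of_lt_of_le (coe_take_strictMono L hlt) (L.take_sublist i).subperm hsum.symm

theorem isDavenportBound_card_add_one (S : Type) [AddCommSemigroup S] [Finite S] :
    IsDavenportBound S (Nat.card S + 1) := by
  rintro ⟨L⟩ hL
  exact .coe_of_card_lt_length hL

end PrefixSums

section Surjective

variable {S Q : Type} [AddCommSemigroup S] [AddCommSemigroup Q] {f : S →ₙ+ Q}

theorem mSum_map (f : S →ₙ+ Q) (T : Multiset S) :
    mSum (T.map f) = WithZero.mapAddHom f (mSum T) := by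
  simp only [mSum_eq_sum_map_coe, map_multiset_sum, Multiset.map_map, Function.comp_def,
    WithZero.mapAddHom_coe]

theorem EqSum.map_of_surjective (hf : Function.Surjective f) {A B : Multiset S}
    (h : EqSum A B) : EqSum (A.map f) (B.map f) := by
  simp only [EqSum, mSum_map]
  obtain hsum | ⟨e, he, hsum⟩ := h
  · exact Or.inl (congrArg _ hsum)
  · have hfe : ∀ q : Q, f e + q = q := hf.forall.2 fun a => by rw [← map_add, he]
    refine Or.inr ⟨f e, hfe, hsum.imp ?_ ?_⟩
    all_goals
      rintro ⟨hA, hB⟩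
      simp only [hA, hB, map_zero, WithZero.mapAddHom_coe, and_self]

theorem Reducible.map_of_surjective (hf : Function.Surjective f) {T : Multiset S} :
    Reducible T → Reducible (T.map f)
  | ⟨B, hBT, hsum⟩ => ⟨B.map f, Multiset.map_lt_map hBT, hsum.map_of_surjective hf⟩

theorem IsDavenportBound.of_surjective (hf : Function.Surjective f) {ℓ : ℕ}
    (hℓ : IsDavenportBound S ℓ) : IsDavenportBound Q ℓ := by
  intro T hT
  obtain ⟨U, rfl⟩ := Multiset.map_surjective_of_surjective hf T
  rw [Multiset.card_map] at hT
  exact (hℓ U hT).map_of_surjective hf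

end Surjective

end EGZ

theorem davenport_reesQuotient_le_general {S Q : Type} [AddCommSemigroup S] [AddCommSemigroup Q]
    (f : S →ₙ+ Q) (hf : Function.Surjective f) (hS : ∃ ℓ, EGZ.IsDavenportBound S ℓ) :
    EGZ.DavC Q ≤ EGZ.DavC S :=
  have hbound : EGZ.IsDavenportBound S (EGZ.DavC S) := Nat.sInf_mem hS
  Nat.sInf_le (hbound.of_surjective hf)

/-- Let `S` be a finite commutative semigroup and `I` a nonempty ideal of
`S`.  Then `D(S) ≥ D(S/I)`, where the Rees quotient `S/I` is presented as a finite
commutative semigroup `Q` together with a surjective additive map `π : S → Q` whose kernel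
congruence is exactly the Rees congruence of `I` (`π a = π b ↔ a = b ∨ (a ∈ I ∧ b ∈ I)`). -/
theorem davenport_reesQuotient_le (S Q : Type) [AddCommSemigroup S] [Fintype S]
    [AddCommSemigroup Q] [Fintype Q]
    (I : Set S) (hne : I.Nonempty) (hideal : ∀ a ∈ I, ∀ s : S, a + s ∈ I)
    (π : S → Q) (hsurj : Function.Surjective π)
    (hhom : ∀ a b : S, π (a + b) = π a + π b)
    (hker : ∀ a b : S, π a = π b ↔ (a = b ∨ (a ∈ I ∧ b ∈ I))) :
    EGZ.DavC Q ≤ EGZ.DavC S :=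
  davenport_reesQuotient_le_general ⟨π, hhom⟩ hsurj ⟨_, EGZ.isDavenportBound_card_add_one S⟩
end

section
/- Let N be a finite commutative nilsemigroup with zero element ∞_N, and let T be a sequence over N with σ(T) ≠ ∞_N. Then T is irreducible, i.e. no proper subsequence B of T satisfies σ(B) = σ(T). -/
/-!
If a proper subsequence of `T` has the same sum `t` as `T`, then `t + u = t` for some `u`: take
for `u` the sum of the removed terms, or `u = t` when `t` is an identity element and the
subsequence is empty. Adding `u` repeatedly gives `t + n • u = t`, and some multiple of `u` is the
absorbing element, so `t` is absorbing.
-/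

namespace EGZ

section AddCommSemigroup

variable {S : Type} [AddCommSemigroup S]

theorem add_rep_of_add_eq_left {t u : S} (h : t + u = t) (n : ℕ) : t + rep u n = t := by
  induction n with
  | zero => exact h
  | succ n ih =>
    calc t + rep u (n + 1) = t + rep u n + u := (add_assoc t (rep u n) u).symm
      _ = t := by rw [ih, h]

theorem eq_zeroElem_of_add_eq_left {z t u : S} (hz : ∀ a : S, z + a = z)
    (hu : ∃ n : ℕ, rep u n = z) (h : t + u = t) : t = z := by
  obtain ⟨n, hn⟩ := hu
  calc t = t + z := by rw [← hn, add_rep_of_add_eq_left h]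
    _ = z := by rw [add_comm, hz]

theorem exists_mSum_eq_coe {A : Multiset S} (hA : A ≠ 0) : ∃ a : S, mSum A = a := by
  rw [mSum_eq_sum_map_coe]
  refine Multiset.sum_induction_nonempty (fun x : WithZero S ↦ ∃ a : S, x = a) ?_ ?_ ?_
  · rintro _ _ ⟨a, rfl⟩ ⟨b, rfl⟩
    exact ⟨a + b, rfl⟩
  · exact mt Multiset.map_eq_zero.1 hA
  · intro x hx
    obtain ⟨a, -, rfl⟩ := Multiset.mem_map.1 hx
    exact ⟨a, rfl⟩

theorem Reducible.exists_add_eq_left {T : Multiset S} (hT : Reducible T) :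
    ∃ t u : S, mSum T = t ∧ t + u = t := by
  obtain ⟨B, hBT, hsum⟩ := hT
  obtain ⟨U, rfl⟩ := Multiset.le_iff_exists_add.1 hBT.le
  have hU : U ≠ 0 := by
    rintro rfl
    exact hBT.ne (add_zero B).symm
  obtain ⟨t, ht⟩ : ∃ t : S, mSum (B + U) = t :=
    exists_mSum_eq_coe fun h ↦ hU (add_eq_zero.1 h).2
  rcases hsum with heq | ⟨e, he, ⟨-, hTe⟩ | ⟨-, hT0⟩⟩
  · obtain ⟨u, hu⟩ := exists_mSum_eq_coe hU
    refine ⟨t, u, ht, WithZero.coe_inj.1 ?_⟩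
    calc ((t + u : S) : WithZero S) = mSum B + mSum U := by rw [heq, ht, hu, WithZero.coe_add]
      _ = t := by rw [← mSum_add, ht]
  · exact ⟨e, e, hTe, he e⟩
  · exact absurd (ht.symm.trans hT0) WithZero.coe_ne_zero

end AddCommSemigroup

end EGZ

theorem irreducible_of_sum_ne_zeroElem_general (N : Type) [AddCommSemigroup N]
    (z : N) (hz : ∀ a : N, z + a = z) (hnil : ∀ x : N, ∃ n : ℕ, EGZ.rep x n = z)
    (T : Multiset N) (hT : EGZ.mSum T ≠ (z : WithZero N)) :
    ¬ EGZ.Reducible T := by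
  intro hred
  obtain ⟨t, u, hTt, htu⟩ := hred.exists_add_eq_left
  have htz : t = z := EGZ.eq_zeroElem_of_add_eq_left hz (hnil u) htu
  exact hT (hTt.trans (congrArg _ htz))

/-- Let `N` be a finite commutative nilsemigroup with zero element `z`,
and let `T` be a sequence over `N` with `σ(T) ≠ z`.  Then `T` is irreducible: no proper
subsequence `B` of `T` satisfies `σ(B) = σ(T)`. -/
theorem irreducible_of_sum_ne_zeroElem (N : Type) [AddCommSemigroup N] [Fintype N]
    (z : N) (hz : ∀ a : N, z + a = z) (hnil : ∀ x : N, ∃ n : ℕ, EGZ.rep x n = z)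
    (T : Multiset N) (hT : EGZ.mSum T ≠ (z : WithZero N)) :
    ¬ EGZ.Reducible T :=
  irreducible_of_sum_ne_zeroElem_general N z hz hnil T hT
end
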